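/- Fix an integer n ≥ 2 and, for 1 ≤ i ≤ n−1, let ρ_i be the n×n matrix over the ring LaurentPolynomial ℤ (in the variable q) that agrees with the identity matrix except in rows and columns i, i+1, where (ρ_i)_{i,i} = 1 − q², (ρ_i)_{i,i+1} = q², (ρ_i)_{i+1,i} = 1, (ρ_i)_{i+1,i+1} = 0. Then the unreduced Burau matrices satisfy the braid group relations: ρ_i ρ_{i+1} ρ_i = ρ_{i+1} ρ_i ρ_{i+1} for 1 ≤ i ≤ n−2, and ρ_i ρ_j = ρ_j ρ_i whenever |i − j| ≥ 2. -/

import Mathlib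

open LaurentPolynomial

/-- The unreduced Burau matrix `ρ_i` (1-based index `i`, `1 ≤ i ≤ n−1`): it agrees with
the `n×n` identity matrix except in rows and columns `i`, `i+1` (which are the 0-based
positions `i−1`, `i`), where the `2×2` block is `[[1−q², q²], [1, 0]]`; here `q = T 1`. -/
noncomputable def burau (n i : ℕ) : Matrix (Fin n) (Fin n) (LaurentPolynomial ℤ) :=
  Matrix.of fun a b =>
    if (a : ℕ) + 1 = i ∧ (b : ℕ) + 1 = i then 1 - T 1 ^ 2
    else if (a : ℕ) + 1 = i ∧ (b : ℕ) = i then T 1 ^ 2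
    else if (a : ℕ) = i ∧ (b : ℕ) + 1 = i then 1
    else if (a : ℕ) = i ∧ (b : ℕ) = i then 0
    else if (a : ℕ) = (b : ℕ) then 1 else 0

open Matrix

/-! The matrix `ρ_i - 1` has rank one: it is `v_i f_iᵀ` with `v_i = e_{i+1} - q² e_i` and
`f_i = e_i - e_{i+1}`. Products of rank-one matrices are governed by the pairings `f_i ⬝ v_j`.
These vanish for `|i - j| ≥ 2`, which gives commutation, while
`f_i ⬝ v_i + (f_i ⬝ v_{i+1}) (f_{i+1} ⬝ v_i) = -(1 + q²) + q² = -1`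
makes both sides of the braid relation, with `a = ρ_i - 1` and `b = ρ_{i+1} - 1`, collapse to the
expression `1 + a + b + ab + ba`, which is symmetric in `a` and `b`. -/

theorem one_add_braid_of_add_eq {A : Type*} [Ring A] {a b : A}
    (h : a + a * a + a * b * a = b + b * b + b * a * b) :
    (1 + a) * (1 + b) * (1 + a) = (1 + b) * (1 + a) * (1 + b) :=
  calc (1 + a) * (1 + b) * (1 + a)
      = 1 + a + b + a * b + b * a + (a + a * a + a * b * a) := by noncomm_ring
    _ = 1 + a + b + a * b + b * a + (b + b * b + b * a * b) := by rw [h]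
    _ = (1 + b) * (1 + a) * (1 + b) := by noncomm_ring

section RankOne

variable {ι R : Type*} [Fintype ι] [CommRing R] {v f w g : ι → R}

theorem vecMulVec_mul_vecMulVec_mul_vecMulVec :
    vecMulVec v f * vecMulVec w g * vecMulVec v f =
      ((f ⬝ᵥ w) * (g ⬝ᵥ v)) • vecMulVec v f := by
  simp only [vecMulVec_mul_vecMulVec, vecMulVec_smul, smul_mul, smul_smul]

theorem vecMulVec_add_sq_add_mul_mul_eq_zero (h : f ⬝ᵥ v + (f ⬝ᵥ w) * (g ⬝ᵥ v) = -1) :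
    vecMulVec v f + vecMulVec v f * vecMulVec v f +
      vecMulVec v f * vecMulVec w g * vecMulVec v f = 0 := by
  rw [vecMulVec_mul_vecMulVec_mul_vecMulVec, vecMulVec_mul_vecMulVec, vecMulVec_smul, add_assoc,
    ← add_smul, h, neg_one_smul, add_neg_cancel]

theorem one_add_vecMulVec_braid [DecidableEq ι]
    (hv : f ⬝ᵥ v + (f ⬝ᵥ w) * (g ⬝ᵥ v) = -1) (hw : g ⬝ᵥ w + (g ⬝ᵥ v) * (f ⬝ᵥ w) = -1) :
    (1 + vecMulVec v f) * (1 + vecMulVec w g) * (1 + vecMulVec v f) =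
      (1 + vecMulVec w g) * (1 + vecMulVec v f) * (1 + vecMulVec w g) :=
  one_add_braid_of_add_eq <|
    (vecMulVec_add_sq_add_mul_mul_eq_zero hv).trans (vecMulVec_add_sq_add_mul_mul_eq_zero hw).symm

theorem commute_one_add_vecMulVec [DecidableEq ι] (hfw : f ⬝ᵥ w = 0) (hgv : g ⬝ᵥ v = 0) :
    Commute (1 + vecMulVec v f) (1 + vecMulVec w g) := by
  have hcomm : Commute (vecMulVec v f) (vecMulVec w g) := by
    simp only [commute_iff_eq, vecMulVec_mul_vecMulVec, hfw, hgv, zero_smul, vecMulVec_zero]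
  exact (Commute.one_left _).add_left ((Commute.one_right _).add_right hcomm)

end RankOne

section BurauReflection

variable {ι R : Type*} [DecidableEq ι] [CommRing R]

/-- The vector `e_r - t e_p` spanning the column space of `burauReflection t p r - 1`. -/
def burauVector (t : R) (p r : ι) : ι → R :=
  Pi.single r 1 - Pi.single p t

variable (R) in
/-- The linear form `e_p - e_r` spanning the row space of `burauReflection t p r - 1`. -/
def burauCovector (p r : ι) : ι → R :=
  Pi.single p 1 - Pi.single r 1

/-- The Burau pseudo-reflection in the coordinates `p` and `r`, with parameter `t`: for `p ≠ r` it
is the identity matrix with the block in rows and columns `p`, `r` (in this order) replaced by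
`[[1 - t, t], [1, 0]]`. The rank-one form makes products computable from pairings. -/
def burauReflection (t : R) (p r : ι) : Matrix ι ι R :=
  1 + vecMulVec (burauVector t p r) (burauCovector R p r)

variable [Fintype ι]

theorem burauCovector_dotProduct (x : ι → R) (p r : ι) :
    burauCovector R p r ⬝ᵥ x = x p - x r := by
  simp only [burauCovector, sub_dotProduct, single_one_dotProduct]

theorem burauReflection_braid (t : R) {p r s : ι} (hpr : p ≠ r) (hrs : r ≠ s) (hps : p ≠ s) :
    burauReflection t p r * burauReflection t r s * burauReflection t p r =
      burauReflection t r s * burauReflection t p r * burauReflection t r s := by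
  have self_pairing {x y : ι} (hxy : x ≠ y) :
      burauCovector R x y ⬝ᵥ burauVector t x y = -(1 + t) := by
    rw [burauCovector_dotProduct]
    simp only [burauVector, Pi.sub_apply, Pi.single_eq_same, Pi.single_eq_of_ne hxy,
      Pi.single_eq_of_ne hxy.symm]
    ring
  have pairing_next : burauCovector R p r ⬝ᵥ burauVector t r s = t := by
    rw [burauCovector_dotProduct]
    simp [burauVector, hpr, hrs, hps]
  have pairing_prev : burauCovector R r s ⬝ᵥ burauVector t p r = 1 := by
    rw [burauCovector_dotProduct]
    simp [burauVector, hpr.symm, hrs.symm, hps.symm]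
  apply one_add_vecMulVec_braid
  · rw [self_pairing hpr, pairing_next, pairing_prev]
    ring
  · rw [self_pairing hrs, pairing_next, pairing_prev]
    ring

theorem burauCovector_dotProduct_burauVector_of_disjoint (t : R) {p r s u : ι}
    (hps : p ≠ s) (hpu : p ≠ u) (hrs : r ≠ s) (hru : r ≠ u) :
    burauCovector R p r ⬝ᵥ burauVector t s u = 0 := by
  rw [burauCovector_dotProduct]
  simp [burauVector, hps, hpu, hrs, hru]

theorem commute_burauReflection (t : R) {p r s u : ι}
    (hps : p ≠ s) (hpu : p ≠ u) (hrs : r ≠ s) (hru : r ≠ u) :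
    Commute (burauReflection t p r) (burauReflection t s u) :=
  commute_one_add_vecMulVec
    (burauCovector_dotProduct_burauVector_of_disjoint t hps hpu hrs hru)
    (burauCovector_dotProduct_burauVector_of_disjoint t hps.symm hrs.symm hpu.symm hru.symm)

end BurauReflection

section BurauMatrix

variable {R : Type*} [CommRing R]

/-- The unreduced Burau matrix over a commutative ring, with an arbitrary parameter `t` in place of
`q²`; the index `i` is 1-based, as in `burau`. -/
def burauMatrix (t : R) (n i : ℕ) : Matrix (Fin n) (Fin n) R :=
  Matrix.of fun a b =>
    if (a : ℕ) + 1 = i ∧ (b : ℕ) + 1 = i then 1 - t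
    else if (a : ℕ) + 1 = i ∧ (b : ℕ) = i then t
    else if (a : ℕ) = i ∧ (b : ℕ) + 1 = i then 1
    else if (a : ℕ) = i ∧ (b : ℕ) = i then 0
    else if (a : ℕ) = (b : ℕ) then 1 else 0

theorem burauMatrix_succ (t : R) {n i : ℕ} (h : i + 1 < n) :
    burauMatrix t n (i + 1) = burauReflection t ⟨i, by omega⟩ ⟨i + 1, h⟩ := by
  ext a b
  simp only [burauMatrix, burauReflection, burauVector, burauCovector, of_apply,
    Matrix.add_apply, one_apply, vecMulVec_apply, Pi.sub_apply, Pi.single_apply, Fin.ext_iff]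
  split_ifs <;> first | omega | ring

theorem stmt10_general (t : R) (n : ℕ) :
    (∀ i : ℕ, 1 ≤ i → i ≤ n - 2 →
      burauMatrix t n i * burauMatrix t n (i + 1) * burauMatrix t n i =
        burauMatrix t n (i + 1) * burauMatrix t n i * burauMatrix t n (i + 1)) ∧
    (∀ i j : ℕ, 1 ≤ i → i ≤ n - 1 → 1 ≤ j → j ≤ n - 1 → (i + 2 ≤ j ∨ j + 2 ≤ i) →
      burauMatrix t n i * burauMatrix t n j = burauMatrix t n j * burauMatrix t n i) := by
  refine ⟨fun i hi hin => ?_, fun i j hi hin hj hjn hij => ?_⟩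
  · obtain ⟨k, rfl⟩ := Nat.exists_eq_add_of_le' hi
    rw [burauMatrix_succ t (i := k) (by omega), burauMatrix_succ t (i := k + 1) (by omega)]
    apply burauReflection_braid <;> simp only [ne_eq, Fin.mk.injEq] <;> omega
  · obtain ⟨k, rfl⟩ := Nat.exists_eq_add_of_le' hi
    obtain ⟨l, rfl⟩ := Nat.exists_eq_add_of_le' hj
    rw [burauMatrix_succ t (i := k) (by omega), burauMatrix_succ t (i := l) (by omega)]
    apply commute_burauReflection <;> simp only [ne_eq, Fin.mk.injEq] <;> omega

end BurauMatrix

/-- The unreduced Burau matrices satisfy the braid group relations of `B_n`. -/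
theorem stmt10 (n : ℕ) (hn : 2 ≤ n) :
    (∀ i : ℕ, 1 ≤ i → i ≤ n - 2 →
      burau n i * burau n (i + 1) * burau n i =
        burau n (i + 1) * burau n i * burau n (i + 1)) ∧
    (∀ i j : ℕ, 1 ≤ i → i ≤ n - 1 → 1 ≤ j → j ≤ n - 1 → (i + 2 ≤ j ∨ j + 2 ≤ i) →
      burau n i * burau n j = burau n j * burau n i) :=
  stmt10_general (T 1 ^ 2) n
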